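/- arXiv:2507.19170 — 3 statements merged into one kernel-verified Lean document; each statement's English description precedes it below -/
import Mathlib

section
/- For every ε > 0, the embedding of D_0^{1,2}(1, +∞) into L²((1,∞); dt/t^{2+ε}) is compact: for every sequence (φ_n) in D_0^{1,2}(1, +∞) with sup_n ∫_1^∞ ‖φ̇_n(t)‖_M² dt < ∞, there exist a subsequence (φ_{n_k}) and a function φ̄ ∈ D_0^{1,2}(1, +∞) such that ∫_1^∞ ‖φ_{n_k}(t) − φ̄(t)‖_M²/t^{2+ε} dt → 0 as k → ∞. -/
open MeasureTheory Real Set Filter Topology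
open scoped RealInnerProductSpace ENNReal

noncomputable section
namespace NBodyHJ

attribute [local instance] Classical.propDecidable

abbrev Conf (d N : ℕ) := Fin N → EuclideanSpace ℝ (Fin d)

variable {d N : ℕ}

/-- The mass inner product on the configuration space. -/
def minner (m : Fin N → ℝ) (x y : Conf d N) : ℝ := ∑ i, m i * ⟪x i, y i⟫

/-- The mass norm on the configuration space. -/
def mnorm (m : Fin N → ℝ) (x : Conf d N) : ℝ := Real.sqrt (minner m x x)

/-- Membership in the zero-barycenter configuration space `X`. -/
def inX (m : Fin N → ℝ) (x : Conf d N) : Prop := ∑ i, m i • x i = 0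

/-- Collision configurations. -/
def collision (x : Conf d N) : Prop := ∃ i j, i ≠ j ∧ x i = x j

/-- Membership in the collision-free zero-barycenter space `Ω`. -/
def inOmega (m : Fin N → ℝ) (x : Conf d N) : Prop := inX m x ∧ ¬ collision x

/-- The Newtonian potential (with junk value `0` for a colliding pair). -/
def U (m : Fin N → ℝ) (x : Conf d N) : ℝ :=
  ∑ i : Fin N, ∑ j : Fin N, if i < j then m i * m j / ‖x i - x j‖ else 0

/-- The time interval `(t₀, T)`, where `T ∈ (t₀, +∞]` is extended-real. -/
def timeSet (t0 : ℝ) (T : EReal) : Set ℝ := {t : ℝ | t0 < t ∧ (t : EReal) < T}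

/-- Membership of the pair (curve, derivative) `(φ, φ')` in `D₀^{1,2}(t₀, T)`:
`φ` starts at `0`, takes values in `X`, is the integral of `φ'` (hence locally
absolutely continuous), and `φ'` has finite `L²` mass norm on `(t₀, T)`. -/
def InD (m : Fin N → ℝ) (t0 : ℝ) (T : EReal) (φ φ' : ℝ → Conf d N) : Prop :=
  φ t0 = 0 ∧
  (∀ t : ℝ, t0 ≤ t → (t : EReal) < T → inX m (φ t)) ∧
  (∀ t : ℝ, t0 ≤ t → (t : EReal) < T → φ t = ∫ s in Set.Ioc t0 t, φ' s) ∧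
  (∀ t : ℝ, t0 ≤ t → (t : EReal) < T → IntegrableOn φ' (Set.Ioc t0 t)) ∧
  IntegrableOn (fun t => (mnorm m (φ' t)) ^ 2) (timeSet t0 T)

/-- The norm `‖φ‖_{D_T}`. -/
def Dnorm (m : Fin N → ℝ) (t0 : ℝ) (T : EReal) (φ' : ℝ → Conf d N) : ℝ :=
  Real.sqrt (∫ t in timeSet t0 T, (mnorm m (φ' t)) ^ 2)

/-- The motion `γ(t) = φ(t) + t a + x - a` associated with `φ` in the hyperbolic case. -/
def hypCurve (a x : Conf d N) (φ : ℝ → Conf d N) (t : ℝ) : Conf d N :=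
  φ t + t • a + x - a

/-- The integrand of the hyperbolic renormalized Lagrangian action. -/
def hypIntegrand (m : Fin N → ℝ) (a x : Conf d N) (φ φ' : ℝ → Conf d N) (t : ℝ) : ℝ :=
  (mnorm m (φ' t)) ^ 2 / 2 + U m (hypCurve a x φ t) - U m (t • a)

/-- The hyperbolic renormalized Lagrangian action `A_{x,[1,T]}(φ)`, with values in
`ℝ ∪ {+∞}` : it equals the integral of the renormalized Lagrangian if this integrand is
integrable and the motion is a.e. collision-free, and `+∞` otherwise. -/
def hypAction (m : Fin N → ℝ) (a x : Conf d N) (T : EReal) (φ φ' : ℝ → Conf d N) : EReal :=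
  if IntegrableOn (hypIntegrand m a x φ φ') (timeSet 1 T) ∧
      (∀ᵐ t ∂volume.restrict (timeSet 1 T), ¬ collision (hypCurve a x φ t))
  then ((∫ t in timeSet 1 T, hypIntegrand m a x φ φ' t : ℝ) : EReal)
  else (⊤ : EReal)

/-- The infimum of the hyperbolic renormalized action over `D₀^{1,2}(1,T)`. -/
def hypInf (m : Fin N → ℝ) (a x : Conf d N) (T : EReal) : EReal :=
  ⨅ (φ : ℝ → Conf d N) (φ' : ℝ → Conf d N) (_ : InD m 1 T φ φ'), hypAction m a x T φ φ'

/-- The renormalized value function `v(x)` in the hyperbolic case. -/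
def hypValue (m : Fin N → ℝ) (a x : Conf d N) : ℝ :=
  (hypInf m a x ⊤).toReal - minner m a x

/-!
The map `x ↦ (√mᵢ • xᵢ)ᵢ` turns the mass norm into a Euclidean norm, so a curve of
`D₀^{1,2}(t₀, ∞)` becomes the primitive of an element of the Hilbert space `L²((t₀, ∞); ℝ^{dN})`.
A bounded sequence of velocities has a weakly convergent subsequence. For fixed `t`, integration
over `(t₀, t]` is a bounded operator into a finite-dimensional space, hence turns weak convergence
of the velocities into pointwise convergence of the curves. By Cauchy–Schwarz the squared norm of
a curve grows at most linearly in `t - t₀`, so dominated convergence gives convergence in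
`L²(w dt)` as soon as `(t - t₀) w(t)` is integrable.
-/

section WeakConvergence

variable {H : Type*} [NormedAddCommGroup H] [InnerProductSpace ℝ H] [CompleteSpace H]

lemma exists_subseq_tendsto_inner [TopologicalSpace.SeparableSpace H] {x : ℕ → H} {R : ℝ}
    (hx : ∀ n, ‖x n‖ ≤ R) :
    ∃ k : ℕ → ℕ, StrictMono k ∧ ∃ y : H, ∀ c : H,
      Tendsto (fun n => ⟪x (k n), c⟫) atTop (𝓝 ⟪y, c⟫) := by
  obtain ⟨l, -, k, hk, hl⟩ := WeakDual.isSeqCompact_closedBall ℝ H 0 R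
    (x := fun n => StrongDual.toWeakDual (InnerProductSpace.toDual ℝ H (x n)))
    (fun n => by simpa using hx n)
  refine ⟨k, hk, (InnerProductSpace.toDual ℝ H).symm (WeakDual.toStrongDual l), fun c => ?_⟩
  rw [InnerProductSpace.toDual_symm_apply]
  exact ((WeakDual.eval_continuous c).tendsto l).comp hl

lemma tendsto_map_of_tendsto_inner {E : Type*} [NormedAddCommGroup E] [InnerProductSpace ℝ E]
    [FiniteDimensional ℝ E] (T : H →L[ℝ] E) {ι : Type*} {l : Filter ι} {x : ι → H} {y : H}
    (h : ∀ c : H, Tendsto (fun n => ⟪x n, c⟫) l (𝓝 ⟪y, c⟫)) :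
    Tendsto (fun n => T (x n)) l (𝓝 (T y)) := by
  have : CompleteSpace E := FiniteDimensional.complete ℝ E
  have hT : ∀ c : E, Tendsto (fun n => ⟪c, T (x n)⟫) l (𝓝 ⟪c, T y⟫) := fun c => by
    simpa only [ContinuousLinearMap.adjoint_inner_right, real_inner_comm c] using h (T.adjoint c)
  let b := stdOrthonormalBasis ℝ E
  rw [← b.sum_repr' (T y)]
  exact (tendsto_finsetSum _ fun i _ => (hT (b i)).smul_const (b i)).congr fun n =>
    b.sum_repr' (T (x n))

end WeakConvergence

lemma norm_setIntegral_Lp_le {α E : Type*} [MeasurableSpace α] {μ : Measure α}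
    [NormedAddCommGroup E] [NormedSpace ℝ E] {p : ℝ≥0∞} [hp : Fact (1 ≤ p)] {s : Set α}
    (hs : μ s ≠ ∞) (f : Lp E p μ) :
    ‖∫ x in s, f x ∂μ‖ ≤ μ.real s ^ (1 - p.toReal⁻¹) * ‖f‖ := by
  have hexp : 0 ≤ 1 - p.toReal⁻¹ := by
    rw [sub_nonneg, ← ENNReal.toReal_inv]
    exact ENNReal.toReal_le_of_le_ofReal zero_le_one
      (by simpa using ENNReal.inv_le_one.2 hp.out)
  have hholder : ‖∫ x in s, f x ∂μ‖ₑ ≤ μ s ^ (1 - p.toReal⁻¹) * eLpNorm f p μ :=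
    calc ‖∫ x in s, f x ∂μ‖ₑ
        ≤ eLpNorm f 1 (μ.restrict s) := by
          rw [eLpNorm_one_eq_lintegral_enorm]
          exact enorm_integral_le_lintegral_enorm _
      _ ≤ eLpNorm f p (μ.restrict s) * μ s ^ (1 - p.toReal⁻¹) := by
          simpa using eLpNorm_le_eLpNorm_mul_rpow_measure_univ hp.out
            (Lp.aestronglyMeasurable f).restrict
      _ ≤ μ s ^ (1 - p.toReal⁻¹) * eLpNorm f p μ := by
          rw [mul_comm]
          gcongr
          exact Measure.restrict_le_self
  have hfin : μ s ^ (1 - p.toReal⁻¹) * eLpNorm f p μ ≠ ∞ :=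
    ENNReal.mul_ne_top (ENNReal.rpow_ne_top_of_nonneg hexp hs) (Lp.eLpNorm_ne_top f)
  simpa [Measure.real, Lp.norm_def, ENNReal.toReal_rpow] using ENNReal.toReal_mono hfin hholder

lemma norm_toLp_two_sq {α E : Type*} [MeasurableSpace α] {μ : Measure α}
    [NormedAddCommGroup E] [InnerProductSpace ℝ E] {f : α → E} (hf : MemLp f 2 μ) :
    ‖hf.toLp f‖ ^ 2 = ∫ x, ‖f x‖ ^ 2 ∂μ := by
  rw [← real_inner_self_eq_norm_sq, L2.inner_def]
  refine integral_congr_ae ?_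
  filter_upwards [hf.coeFn_toLp] with x hx
  rw [hx, real_inner_self_eq_norm_sq]

section Primitive

variable {E : Type*} [NormedAddCommGroup E] {a : ℝ}

lemma restrict_Ioi_Ioc (a t : ℝ) :
    (volume.restrict (Ioi a)).restrict (Ioc a t) = volume.restrict (Ioc a t) :=
  Measure.restrict_restrict_of_subset Ioc_subset_Ioi_self

lemma integrableOn_Ioc_Lp (f : Lp E 2 (volume.restrict (Ioi a))) (t : ℝ) :
    IntegrableOn f (Ioc a t) := by
  have h : MemLp f 2 (volume.restrict (Ioc a t)) :=
    (Lp.memLp f).mono_measure (Measure.restrict_mono Ioc_subset_Ioi_self le_rfl)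
  exact h.integrable one_le_two

variable [NormedSpace ℝ E]

lemma norm_setIntegral_Ioc_Lp_le (f : Lp E 2 (volume.restrict (Ioi a))) (t : ℝ) :
    ‖∫ s in Ioc a t, f s‖ ≤ √(t - a) * ‖f‖ := by
  have hvol : volume.restrict (Ioi a) (Ioc a t) = volume (Ioc a t) := by
    rw [← Measure.restrict_apply_univ, restrict_Ioi_Ioc, Measure.restrict_apply_univ]
  have h := norm_setIntegral_Lp_le (s := Ioc a t) (by simp [hvol]) f
  rw [restrict_Ioi_Ioc, Measure.real, hvol, Real.volume_Ioc, ENNReal.toReal_ofReal'] at h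
  rcases le_total a t with hat | hta
  · rw [max_eq_left (sub_nonneg.2 hat)] at h
    rwa [Real.sqrt_eq_rpow, show (1 / 2 : ℝ) = 1 - (2 : ℝ≥0∞).toReal⁻¹ by norm_num]
  · rw [Ioc_eq_empty_of_le hta, setIntegral_empty, norm_zero]
    positivity

/-- The primitive at time `t` vanishing at `a`, as a bounded operator on `L²(a, ∞)`; it is zero
for `t ≤ a`. -/
def primitive (a t : ℝ) : Lp E 2 (volume.restrict (Ioi a)) →L[ℝ] E :=
  LinearMap.mkContinuous
    { toFun := fun f => ∫ s in Ioc a t, f s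
      map_add' := fun f g => by
        rw [← integral_add (integrableOn_Ioc_Lp f t) (integrableOn_Ioc_Lp g t), ← restrict_Ioi_Ioc]
        exact integral_congr_ae (ae_restrict_of_ae (Lp.coeFn_add f g))
      map_smul' := fun c f => by
        rw [RingHom.id_apply, ← integral_smul, ← restrict_Ioi_Ioc]
        exact integral_congr_ae (ae_restrict_of_ae (Lp.coeFn_smul c f)) }
    √(t - a) fun f => norm_setIntegral_Ioc_Lp_le f t

lemma primitive_apply (a t : ℝ) (f : Lp E 2 (volume.restrict (Ioi a))) :
    primitive a t f = ∫ s in Ioc a t, f s := rfl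

lemma norm_primitive_sq_le {t : ℝ} (ht : a ≤ t) (f : Lp E 2 (volume.restrict (Ioi a))) :
    ‖primitive a t f‖ ^ 2 ≤ (t - a) * ‖f‖ ^ 2 :=
  calc ‖primitive a t f‖ ^ 2 ≤ (√(t - a) * ‖f‖) ^ 2 := by
        gcongr
        exact norm_setIntegral_Ioc_Lp_le f t
    _ = (t - a) * ‖f‖ ^ 2 := by rw [mul_pow, Real.sq_sqrt (sub_nonneg.2 ht)]

lemma continuousOn_primitive (f : Lp E 2 (volume.restrict (Ioi a))) :
    ContinuousOn (fun t => primitive a t f) (Ioi a) := by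
  intro t (ht : a < t)
  have h := intervalIntegral.continuousOn_primitive
    ((integrableOn_Icc_iff_integrableOn_Ioc).2 (integrableOn_Ioc_Lp f (t + 1)))
  exact (h.continuousAt (Icc_mem_nhds ht (lt_add_one t))).continuousWithinAt

lemma tendsto_integral_norm_primitive_sq_mul {ι : Type*} {l : Filter ι} [l.IsCountablyGenerated]
    {f : ι → Lp E 2 (volume.restrict (Ioi a))} {R : ℝ} (hR : ∀ n, ‖f n‖ ≤ R)
    (hf : ∀ t, Tendsto (fun n => primitive a t (f n)) l (𝓝 0))
    {w : ℝ → ℝ} (hw : IntegrableOn (fun t => (t - a) * w t) (Ioi a)) :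
    Tendsto (fun n => ∫ t in Ioi a, ‖primitive a t (f n)‖ ^ 2 * w t) l (𝓝 0) := by
  have hw_meas : AEStronglyMeasurable w (volume.restrict (Ioi a)) := by
    have hinv : Measurable fun t : ℝ => (t - a)⁻¹ := by fun_prop
    refine (hinv.aestronglyMeasurable.mul hw.aestronglyMeasurable).congr ?_
    filter_upwards [ae_restrict_mem measurableSet_Ioi] with t ht
    exact inv_mul_cancel_left₀ (sub_pos.2 ht).ne' (w t)
  rw [← integral_zero ℝ ℝ (μ := volume.restrict (Ioi a))]
  refine tendsto_integral_filter_of_dominated_convergence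
    (fun t => R ^ 2 * ‖(t - a) * w t‖) (.of_forall fun n => ?_) (.of_forall fun n => ?_)
    (hw.norm.const_mul _) (ae_of_all _ fun t => ?_)
  · exact (((continuousOn_primitive (f n)).norm.pow 2).aestronglyMeasurable
      measurableSet_Ioi).mul hw_meas
  · filter_upwards [ae_restrict_mem measurableSet_Ioi] with t (ht : a < t)
    have hta : 0 ≤ t - a := sub_nonneg.2 ht.le
    calc ‖‖primitive a t (f n)‖ ^ 2 * w t‖ = ‖primitive a t (f n)‖ ^ 2 * |w t| := by simp
      _ ≤ (t - a) * R ^ 2 * |w t| := by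
        gcongr
        exact (norm_primitive_sq_le ht.le (f n)).trans (by gcongr; exact hR n)
      _ = R ^ 2 * ‖(t - a) * w t‖ := by
        rw [norm_mul, Real.norm_of_nonneg hta, Real.norm_eq_abs]
        ring
  · simpa using ((hf t).norm.pow 2).mul_const (w t)

end Primitive

lemma exists_subseq_tendsto_primitive {E : Type*} [NormedAddCommGroup E] [InnerProductSpace ℝ E]
    [FiniteDimensional ℝ E] {a : ℝ} {f : ℕ → Lp E 2 (volume.restrict (Ioi a))} {R : ℝ}
    (hf : ∀ n, ‖f n‖ ≤ R) :
    ∃ k : ℕ → ℕ, StrictMono k ∧ ∃ g : Lp E 2 (volume.restrict (Ioi a)),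
      ∀ t, Tendsto (fun j => primitive a t (f (k j))) atTop (𝓝 (primitive a t g)) := by
  have : CompleteSpace E := FiniteDimensional.complete ℝ E
  have : Fact ((2 : ℝ≥0∞) ≠ ∞) := ⟨ENNReal.ofNat_ne_top⟩
  obtain ⟨k, hk, g, hg⟩ := exists_subseq_tendsto_inner hf
  exact ⟨k, hk, g, fun t => tendsto_map_of_tendsto_inner (primitive a t) hg⟩

section MassNorm

variable {m : Fin N → ℝ}

/-- The configuration space with its unweighted Euclidean norm. -/
abbrev EConf (d N : ℕ) := PiLp 2 fun _ : Fin N => EuclideanSpace ℝ (Fin d)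

/-- The isometry `x ↦ (√mᵢ • xᵢ)ᵢ` from the mass norm to the Euclidean norm. It is bundled only as
a continuous linear equivalence because `Conf d N` itself carries the sup norm. -/
def massEquiv (hm : ∀ i, 0 < m i) : Conf d N ≃L[ℝ] EConf d N :=
  (ContinuousLinearEquiv.piCongrRight fun i =>
      ContinuousLinearEquiv.smulLeft (Units.mk0 √(m i) (Real.sqrt_pos.2 (hm i)).ne')).trans
    (PiLp.continuousLinearEquiv 2 ℝ fun _ : Fin N => EuclideanSpace ℝ (Fin d)).symm

lemma massEquiv_apply (hm : ∀ i, 0 < m i) (x : Conf d N) (i : Fin N) :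
    massEquiv hm x i = √(m i) • x i := rfl

lemma norm_massEquiv (hm : ∀ i, 0 < m i) (x : Conf d N) : ‖massEquiv hm x‖ = mnorm m x := by
  rw [PiLp.norm_eq_of_L2, mnorm, minner]
  congr! 2 with i
  rw [massEquiv_apply, norm_smul, mul_pow, Real.norm_of_nonneg (Real.sqrt_nonneg _),
    Real.sq_sqrt (hm i).le, real_inner_self_eq_norm_sq]

lemma isClosed_inX (m : Fin N → ℝ) : IsClosed {x : Conf d N | inX m x} :=
  isClosed_eq (by fun_prop) continuous_const

end MassNorm

section Curves

variable {m : Fin N → ℝ} {t0 : ℝ} {φ φ' : ℝ → Conf d N}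

lemma timeSet_top (t0 : ℝ) : timeSet t0 ⊤ = Ioi t0 := by
  ext t
  simp [timeSet, EReal.coe_lt_top]

lemma InD.aestronglyMeasurable (h : InD m t0 ⊤ φ φ') :
    AEStronglyMeasurable φ' (volume.restrict (Ioi t0)) := by
  obtain ⟨-, -, -, hint, -⟩ := h
  rw [← iUnion_Ioc_eq_Ioi_self_iff.2 fun t _ => exists_nat_ge t, aestronglyMeasurable_iUnion_iff]
  intro n
  rcases le_total t0 n with hn | hn
  · exact (hint n hn (EReal.coe_lt_top _)).aestronglyMeasurable
  · simp [Ioc_eq_empty_of_le hn]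

lemma InD.memLp (hm : ∀ i, 0 < m i) (h : InD m t0 ⊤ φ φ') :
    MemLp (fun t => massEquiv hm (φ' t)) 2 (volume.restrict (Ioi t0)) := by
  have hmeas := (massEquiv hm).continuous.comp_aestronglyMeasurable h.aestronglyMeasurable
  obtain ⟨-, -, -, -, hsq⟩ := h
  refine (memLp_two_iff_integrable_sq_norm hmeas).2 ?_
  simpa only [norm_massEquiv, timeSet_top, IntegrableOn] using hsq

/-- The derivative of a curve in `D₀^{1,2}(t₀, ∞)`, in the coordinates of `massEquiv`, as an
element of `L²(t₀, ∞)`. -/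
def InD.velocity (hm : ∀ i, 0 < m i) (h : InD m t0 ⊤ φ φ') :
    Lp (EConf d N) 2 (volume.restrict (Ioi t0)) :=
  (h.memLp hm).toLp

lemma InD.norm_velocity_sq (hm : ∀ i, 0 < m i) (h : InD m t0 ⊤ φ φ') :
    ‖h.velocity hm‖ ^ 2 = ∫ t in Ioi t0, mnorm m (φ' t) ^ 2 := by
  simp only [velocity, norm_toLp_two_sq, norm_massEquiv]

lemma InD.primitive_velocity (hm : ∀ i, 0 < m i) (h : InD m t0 ⊤ φ φ') {t : ℝ} (ht : t0 ≤ t) :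
    primitive t0 t (h.velocity hm) = massEquiv hm (φ t) := by
  have hφ : φ t = ∫ s in Ioc t0 t, φ' s := h.2.2.1 t ht (EReal.coe_lt_top t)
  rw [hφ, ← (massEquiv hm).integral_comp_comm, primitive_apply,
    ← restrict_Ioi_Ioc]
  exact integral_congr_ae (ae_restrict_of_ae (h.memLp hm).coeFn_toLp)

lemma inD_primitive (hm : ∀ i, 0 < m i) {g : Lp (EConf d N) 2 (volume.restrict (Ioi t0))}
    (hX : ∀ t, t0 ≤ t → inX m ((massEquiv hm).symm (primitive t0 t g))) :
    InD m t0 ⊤ (fun t => (massEquiv hm).symm (primitive t0 t g))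
      (fun t => (massEquiv hm).symm (g t)) := by
  refine ⟨by simp [primitive_apply], fun t ht _ => hX t ht, fun t _ _ => ?_, fun t _ _ => ?_, ?_⟩
  · simp only [primitive_apply, (massEquiv hm).symm.integral_comp_comm]
  · exact (massEquiv hm).symm.toContinuousLinearMap.integrable_comp (integrableOn_Ioc_Lp g t)
  · simpa only [← norm_massEquiv hm, ContinuousLinearEquiv.apply_symm_apply, timeSet_top,
      IntegrableOn] using
      (memLp_two_iff_integrable_sq_norm (Lp.aestronglyMeasurable g)).1 (Lp.memLp g)

end Curves

lemma integrableOn_sub_mul_inv_rpow {a ε : ℝ} (ha : 0 < a) (hε : 0 < ε) :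
    IntegrableOn (fun t => (t - a) * (t ^ (2 + ε))⁻¹) (Ioi a) := by
  have h_lead := integrableOn_Ioi_rpow_of_lt (by linarith : -(1 + ε) < -1) ha
  have h_corr := integrableOn_Ioi_rpow_of_lt (by linarith : -(2 + ε) < -1) ha
  refine (h_lead.sub (h_corr.const_mul a)).congr_fun (fun t (ht : a < t) => ?_) measurableSet_Ioi
  have ht0 : 0 < t := ha.trans ht
  have hmul : t ^ (-(1 + ε)) = t * t ^ (-(2 + ε)) := by
    rw [← Real.rpow_one_add' ht0.le (by linarith)]
    ring_nf
  simp only [Pi.sub_apply, hmul, Real.rpow_neg ht0.le]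
  ring

theorem compact_embedding_general {m : Fin N → ℝ} (hm : ∀ i, 0 < m i) {t0 : ℝ} {w : ℝ → ℝ}
    (hw : IntegrableOn (fun t => (t - t0) * w t) (Ioi t0))
    {φ φ' : ℕ → ℝ → Conf d N} (hmem : ∀ n, InD m t0 ⊤ (φ n) (φ' n))
    {C : ℝ} (hbdd : ∀ n, ∫ t in Ioi t0, mnorm m (φ' n t) ^ 2 ≤ C) :
    ∃ k : ℕ → ℕ, StrictMono k ∧ ∃ ψ ψ' : ℝ → Conf d N, InD m t0 ⊤ ψ ψ' ∧
      Tendsto (fun j => ∫ t in Ioi t0, mnorm m (φ (k j) t - ψ t) ^ 2 * w t) atTop (𝓝 0) := by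
  let F n := (hmem n).velocity hm
  have hF : ∀ n, ‖F n‖ ≤ √C := fun n =>
    Real.le_sqrt_of_sq_le (((hmem n).norm_velocity_sq hm).trans_le (hbdd n))
  obtain ⟨k, hk, g, hg⟩ := exists_subseq_tendsto_primitive hF
  let ψ t := (massEquiv hm).symm (primitive t0 t g)
  have hφψ : ∀ t, t0 ≤ t → Tendsto (fun j => φ (k j) t) atTop (𝓝 (ψ t)) := fun t ht => by
    simpa [F, InD.primitive_velocity, ht, Function.comp_def] using
      ((massEquiv hm).symm.continuous.tendsto _).comp (hg t)
  have hψX : ∀ t, t0 ≤ t → inX m (ψ t) := fun t ht =>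
    (isClosed_inX m).mem_of_tendsto (hφψ t ht)
      (.of_forall fun j => (hmem (k j)).2.1 t ht (EReal.coe_lt_top t))
  refine ⟨k, hk, ψ, _, inD_primitive hm hψX, ?_⟩
  have hdiff : ∀ j, ∀ t ∈ Ioi t0,
      mnorm m (φ (k j) t - ψ t) = ‖primitive t0 t (F (k j) - g)‖ := fun j t (ht : t0 < t) => by
    rw [← norm_massEquiv hm, map_sub, map_sub, (hmem (k j)).primitive_velocity hm ht.le,
      ContinuousLinearEquiv.apply_symm_apply]
  refine (tendsto_integral_norm_primitive_sq_mul (f := fun j => F (k j) - g)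
    (fun j => norm_sub_le_of_le (hF (k j)) le_rfl) (fun t => ?_) hw).congr fun j =>
      setIntegral_congr_fun measurableSet_Ioi fun t ht => by simp only [hdiff j t ht]
  simpa using (hg t).sub_const (primitive t0 t g)

/-- **Compact embedding** of `D₀^{1,2}(1, +∞)` into `L²((1,∞); dt/t^{2+ε})`, `ε > 0` :
every sequence in `D₀^{1,2}(1, +∞)` which is bounded in the `D`-norm admits a subsequence
converging to some `φ̄ ∈ D₀^{1,2}(1, +∞)` in the weighted `L²` norm. -/
theorem compact_embedding {d N : ℕ} (hd : 2 ≤ d) (hN : 2 ≤ N)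
    (m : Fin N → ℝ) (hm : ∀ i, 0 < m i)
    (ε : ℝ) (hε : 0 < ε)
    (φ φ' : ℕ → ℝ → Conf d N) (hmem : ∀ n, InD m 1 ⊤ (φ n) (φ' n))
    (C : ℝ) (hbdd : ∀ n, ∫ t in Set.Ioi (1:ℝ), (mnorm m (φ' n t)) ^ 2 ≤ C) :
    ∃ k : ℕ → ℕ, StrictMono k ∧
      ∃ ψ ψ' : ℝ → Conf d N, InD m 1 ⊤ ψ ψ' ∧
        Filter.Tendsto
          (fun j => ∫ t in Set.Ioi (1:ℝ), (mnorm m (φ (k j) t - ψ t)) ^ 2 / t ^ (2 + ε))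
          Filter.atTop (nhds 0) := by
  simpa only [div_eq_mul_inv] using
    compact_embedding_general hm (integrableOn_sub_mul_inv_rpow one_pos hε) hmem hbdd

end NBodyHJ
end
end

section
/- Uniform coercivity in the hyperbolic case: for every compact set K ⊂ X there exist constants A > 0 and B, C ≥ 0, independent of x and T, such that for all x ∈ K, all T ∈ (1, +∞], and all φ ∈ D_0^{1,2}(1, T), one has A_{x,[1,T]}(φ) ≥ A ‖φ‖_{D_T}² − B ‖φ‖_{D_T} − C. -/
open MeasureTheory Real Set Filter Topology
open scoped RealInnerProductSpace ENNReal

noncomputable section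
namespace NBodyHJ

attribute [local instance] Classical.propDecidable

variable {d N : ℕ}

/-!
By the Cauchy–Schwarz inequality, a curve `φ` in `D₀^{1,2}(1, T)` satisfies
`‖φ t‖ ≤ c √(t - 1) ‖φ‖_{D_T}`, so the motion `φ t + t a + x - a` stays within `O(√t)` of `t a`,
with a constant that is affine in `‖φ‖_{D_T}`. Since `r ↦ 1 / r` is convex, the potential drops by
at most the size of this deviation times an inverse-square sum evaluated at `t a`, which is
`O(t⁻²)`. The potential part of the renormalized action is therefore at least
`-(B ‖φ‖_{D_T} + C) ∫ t ^ (-3/2)`, and the kinetic part is exactly `‖φ‖_{D_T}² / 2`.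
All norms `‖·‖` on configurations are the supremum over the bodies, which the mass norm controls.
-/

lemma sq_norm_integral_le_measureReal_univ_mul {α E : Type*} [MeasurableSpace α]
    [NormedAddCommGroup E] [NormedSpace ℝ E] {μ : Measure α} [IsFiniteMeasure μ] {f : α → E}
    (hf : MemLp f 2 μ) : ‖∫ s, f s ∂μ‖ ^ 2 ≤ μ.real univ * ∫ s, ‖f s‖ ^ 2 ∂μ := by
  have hölder := integral_mul_le_Lp_mul_Lq_of_nonneg (μ := μ) Real.HolderConjugate.two_two
    (f := fun _ => (1 : ℝ)) (g := fun s => ‖f s‖) (ae_of_all _ fun _ => zero_le_one)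
    (ae_of_all _ fun _ => norm_nonneg _) (by simpa using memLp_const 1) (by simpa using hf.norm)
  simp only [one_mul, integral_const, smul_eq_mul, Real.rpow_two, one_pow, mul_one,
    ← Real.sqrt_eq_rpow] at hölder
  calc ‖∫ s, f s ∂μ‖ ^ 2 ≤ (√(μ.real univ) * √(∫ s, ‖f s‖ ^ 2 ∂μ)) ^ 2 := by
        gcongr
        exact (norm_integral_le_integral_norm f).trans hölder
    _ = μ.real univ * ∫ s, ‖f s‖ ^ 2 ∂μ := by
        rw [mul_pow, Real.sq_sqrt measureReal_nonneg,
          Real.sq_sqrt (integral_nonneg fun _ => sq_nonneg _)]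

-- The tangent line at `b` lies below the convex function `r ↦ 1 / r`.
lemma inv_sub_inv_le_sub_div_sq {b r : ℝ} (hb : 0 < b) (hr : 0 < r) :
    b⁻¹ - r⁻¹ ≤ (r - b) / b ^ 2 := by
  have hgap : (r - b) / b ^ 2 - (b⁻¹ - r⁻¹) = (r - b) ^ 2 / (b ^ 2 * r) := by
    field_simp
  have : 0 ≤ (r - b) ^ 2 / (b ^ 2 * r) := by positivity
  linarith

lemma norm_apply_sub_apply_sub_le {ι E : Type*} [Fintype ι] [SeminormedAddCommGroup E] (y z : ι → E)
    (i j : ι) : ‖z i - z j‖ - ‖y i - y j‖ ≤ 2 * ‖z - y‖ :=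
  calc ‖z i - z j‖ - ‖y i - y j‖ ≤ ‖(z i - z j) - (y i - y j)‖ := norm_sub_norm_le _ _
    _ = ‖(z - y) i - (z - y) j‖ := by rw [Pi.sub_apply, Pi.sub_apply, sub_sub_sub_comm]
    _ ≤ ‖(z - y) i‖ + ‖(z - y) j‖ := norm_sub_le _ _
    _ ≤ 2 * ‖z - y‖ := by linarith [norm_le_pi_norm (z - y) i, norm_le_pi_norm (z - y) j]

lemma sqrt_div_sq_eq_rpow {t : ℝ} (ht : 0 < t) : √t / t ^ 2 = t ^ (-(3 / 2) : ℝ) := by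
  rw [Real.sqrt_eq_rpow, ← Real.rpow_natCast t 2, ← Real.rpow_sub ht]
  norm_num

section

variable {m : Fin N → ℝ} {T : EReal} {φ φ' : ℝ → Conf d N}

lemma mnorm_sq (hm : ∀ i, 0 ≤ m i) (v : Conf d N) : mnorm m v ^ 2 = ∑ i, m i * ‖v i‖ ^ 2 := by
  have hnonneg : 0 ≤ minner m v v :=
    Finset.sum_nonneg fun i _ => mul_nonneg (hm i) real_inner_self_nonneg
  rw [mnorm, Real.sq_sqrt hnonneg]
  simp [minner]

lemma norm_sq_le_sum_inv_mul_mnorm_sq (hm : ∀ i, 0 < m i) (v : Conf d N) :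
    ‖v‖ ^ 2 ≤ (∑ j, (m j)⁻¹) * mnorm m v ^ 2 := by
  have hinv : ∀ j, 0 ≤ (m j)⁻¹ := fun j => (inv_pos.2 (hm j)).le
  have hsum : 0 ≤ ∑ j, (m j)⁻¹ := Finset.sum_nonneg fun j _ => hinv j
  have hbound : 0 ≤ (∑ j, (m j)⁻¹) * mnorm m v ^ 2 := mul_nonneg hsum (sq_nonneg _)
  rw [← Real.le_sqrt (norm_nonneg v) hbound]
  refine (pi_norm_le_iff_of_nonneg (Real.sqrt_nonneg _)).2 fun i => Real.le_sqrt_of_sq_le ?_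
  calc ‖v i‖ ^ 2 = (m i)⁻¹ * (m i * ‖v i‖ ^ 2) := (inv_mul_cancel_left₀ (hm i).ne' _).symm
    _ ≤ (∑ j, (m j)⁻¹) * ∑ j, m j * ‖v j‖ ^ 2 := by
        have hmass : ∀ j, 0 ≤ m j * ‖v j‖ ^ 2 := fun j => mul_nonneg (hm j).le (sq_nonneg _)
        gcongr
        · exact hmass i
        · exact Finset.single_le_sum (fun j _ => hinv j) (Finset.mem_univ i)
        · exact Finset.single_le_sum (fun j _ => hmass j) (Finset.mem_univ i)
    _ = (∑ j, (m j)⁻¹) * mnorm m v ^ 2 := by rw [mnorm_sq fun j => (hm j).le]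

lemma memLp_two_of_integrable_mnorm_sq {α : Type*} [MeasurableSpace α] {μ : Measure α}
    (hm : ∀ i, 0 < m i) {f : α → Conf d N} (hf : AEStronglyMeasurable f μ)
    (hsq : Integrable (fun s => mnorm m (f s) ^ 2) μ) : MemLp f 2 μ := by
  refine (memLp_two_iff_integrable_sq_norm hf).2
    ((hsq.const_mul (∑ j, (m j)⁻¹)).mono' (hf.norm.pow 2) (ae_of_all _ fun s => ?_))
  rw [Real.norm_of_nonneg (sq_nonneg _)]
  exact norm_sq_le_sum_inv_mul_mnorm_sq hm (f s)

lemma measurableSet_timeSet (t₀ : ℝ) (T : EReal) : MeasurableSet (timeSet t₀ T) :=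
  measurableSet_Ioi.inter (measurable_coe_real_ereal measurableSet_Iio)

lemma Ioc_subset_timeSet {t₀ t : ℝ} (htT : (t : EReal) < T) : Ioc t₀ t ⊆ timeSet t₀ T :=
  fun _ hs => ⟨hs.1, (EReal.coe_le_coe_iff.2 hs.2).trans_lt htT⟩

lemma timeSet_subset_Ioi (t₀ : ℝ) (T : EReal) : timeSet t₀ T ⊆ Ioi t₀ := fun _ ht => ht.1

lemma integrableOn_rpow_timeSet {t₀ p : ℝ} (hp : p < -1) (ht₀ : 0 < t₀) (T : EReal) :
    IntegrableOn (fun t : ℝ => t ^ p) (timeSet t₀ T) :=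
  (integrableOn_Ioi_rpow_of_lt hp ht₀).mono_set (timeSet_subset_Ioi t₀ T)

lemma setIntegral_rpow_timeSet_le {t₀ p : ℝ} (hp : p < -1) (ht₀ : 0 < t₀) (T : EReal) :
    ∫ t in timeSet t₀ T, t ^ p ≤ -t₀ ^ (p + 1) / (p + 1) := by
  rw [← integral_Ioi_rpow_of_lt hp ht₀]
  refine setIntegral_mono_set (integrableOn_Ioi_rpow_of_lt hp ht₀) ?_
    (timeSet_subset_Ioi t₀ T).eventuallyLE
  filter_upwards [ae_restrict_mem measurableSet_Ioi] with t ht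
  exact Real.rpow_nonneg (ht₀.trans ht).le p

lemma Dnorm_sq (m : Fin N → ℝ) (t₀ : ℝ) (T : EReal) (φ' : ℝ → Conf d N) :
    Dnorm m t₀ T φ' ^ 2 = ∫ t in timeSet t₀ T, mnorm m (φ' t) ^ 2 :=
  Real.sq_sqrt (integral_nonneg fun _ => sq_nonneg _)

lemma InD.norm_sq_le (hm : ∀ i, 0 < m i) {t₀ : ℝ} (h : InD m t₀ T φ φ') {t : ℝ}
    (ht : t₀ ≤ t) (htT : (t : EReal) < T) :
    ‖φ t‖ ^ 2 ≤ (t - t₀) * ((∑ j, (m j)⁻¹) * Dnorm m t₀ T φ' ^ 2) := by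
  obtain ⟨-, -, hφ, hint, hsq⟩ := h
  have hsub : Ioc t₀ t ⊆ timeSet t₀ T := Ioc_subset_timeSet htT
  have hsum : 0 ≤ ∑ j, (m j)⁻¹ := Finset.sum_nonneg fun j _ => (inv_pos.2 (hm j)).le
  have hLp : MemLp φ' 2 (volume.restrict (Ioc t₀ t)) :=
    memLp_two_of_integrable_mnorm_sq hm (hint t ht htT).aestronglyMeasurable (hsq.mono_set hsub)
  calc ‖φ t‖ ^ 2 = ‖∫ s in Ioc t₀ t, φ' s‖ ^ 2 := by rw [hφ t ht htT]
    _ ≤ (t - t₀) * ∫ s in Ioc t₀ t, ‖φ' s‖ ^ 2 := by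
        simpa [ht] using sq_norm_integral_le_measureReal_univ_mul hLp
    _ ≤ (t - t₀) * ∫ s in Ioc t₀ t, (∑ j, (m j)⁻¹) * mnorm m (φ' s) ^ 2 :=
        mul_le_mul_of_nonneg_left
          (integral_mono hLp.norm.integrable_sq ((hsq.mono_set hsub).const_mul _)
            fun s => norm_sq_le_sum_inv_mul_mnorm_sq hm (φ' s))
          (sub_nonneg.2 ht)
    _ ≤ (t - t₀) * ((∑ j, (m j)⁻¹) * Dnorm m t₀ T φ' ^ 2) := by
        rw [integral_const_mul, Dnorm_sq]
        have hmono := setIntegral_mono_set hsq (ae_of_all _ fun _ => sq_nonneg _)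
          hsub.eventuallyLE
        exact mul_le_mul_of_nonneg_left (mul_le_mul_of_nonneg_left hmono hsum) (sub_nonneg.2 ht)

lemma InD.norm_le (hm : ∀ i, 0 < m i) {t₀ : ℝ} (h : InD m t₀ T φ φ') {t : ℝ}
    (ht : t₀ ≤ t) (htT : (t : EReal) < T) :
    ‖φ t‖ ≤ √(t - t₀) * (√(∑ j, (m j)⁻¹) * Dnorm m t₀ T φ') := by
  have hD : 0 ≤ Dnorm m t₀ T φ' := Real.sqrt_nonneg _
  refine (Real.le_sqrt_of_sq_le (h.norm_sq_le hm ht htT)).trans_eq ?_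
  rw [Real.sqrt_mul (sub_nonneg.2 ht), Real.sqrt_mul' _ (sq_nonneg _), Real.sqrt_sq hD]

/-- The inverse-square potential `∑_{i < j} m_i m_j / |r_i - r_j|²`. It bounds the variation of the
Newtonian potential `U` around `x`; as in `U`, a colliding pair contributes the junk value `0`. -/
def inverseSquarePotential (m : Fin N → ℝ) (x : Conf d N) : ℝ :=
  ∑ i : Fin N, ∑ j : Fin N, if i < j then m i * m j / ‖x i - x j‖ ^ 2 else 0

lemma inverseSquarePotential_nonneg (hm : ∀ i, 0 ≤ m i) (x : Conf d N) :
    0 ≤ inverseSquarePotential m x :=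
  Finset.sum_nonneg fun i _ => Finset.sum_nonneg fun j _ => by
    have := mul_nonneg (hm i) (hm j)
    split_ifs <;> positivity

lemma inverseSquarePotential_smul (m : Fin N → ℝ) (t : ℝ) (x : Conf d N) :
    inverseSquarePotential m (t • x) = inverseSquarePotential m x / t ^ 2 := by
  simp only [inverseSquarePotential, Finset.sum_div, Pi.smul_apply, ← smul_sub, norm_smul, mul_pow,
    Real.norm_eq_abs, sq_abs, ite_div, zero_div, div_div, mul_comm (t ^ 2)]

lemma norm_sub_pos_of_not_collision {x : Conf d N} (hx : ¬ collision x) {i j : Fin N}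
    (hij : i ≠ j) : 0 < ‖x i - x j‖ :=
  norm_sub_pos_iff.2 fun h => hx ⟨i, j, hij, h⟩

lemma collision_smul_iff {t : ℝ} (ht : t ≠ 0) {x : Conf d N} : collision (t • x) ↔ collision x := by
  simp [collision, ht]

lemma U_sub_U_le (hm : ∀ i, 0 ≤ m i) {y z : Conf d N} (hy : ¬ collision y)
    (hz : ¬ collision z) : U m y - U m z ≤ 2 * ‖z - y‖ * inverseSquarePotential m y := by
  simp only [U, inverseSquarePotential, ← Finset.sum_sub_distrib, Finset.mul_sum]
  refine Finset.sum_le_sum fun i _ => Finset.sum_le_sum fun j _ => ?_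
  split_ifs with hij
  · calc m i * m j / ‖y i - y j‖ - m i * m j / ‖z i - z j‖
        = m i * m j * (‖y i - y j‖⁻¹ - ‖z i - z j‖⁻¹) := by ring
      _ ≤ m i * m j * ((‖z i - z j‖ - ‖y i - y j‖) / ‖y i - y j‖ ^ 2) :=
          mul_le_mul_of_nonneg_left
            (inv_sub_inv_le_sub_div_sq (norm_sub_pos_of_not_collision hy hij.ne)
              (norm_sub_pos_of_not_collision hz hij.ne))
            (mul_nonneg (hm i) (hm j))
      _ ≤ m i * m j * (2 * ‖z - y‖ / ‖y i - y j‖ ^ 2) :=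
          mul_le_mul_of_nonneg_left
            (div_le_div_of_nonneg_right (norm_apply_sub_apply_sub_le y z i j) (sq_nonneg _))
            (mul_nonneg (hm i) (hm j))
      _ = 2 * ‖z - y‖ * (m i * m j / ‖y i - y j‖ ^ 2) := by ring
  · simp

lemma InD.norm_hypCurve_sub_smul_le (hm : ∀ i, 0 < m i) (h : InD m 1 T φ φ')
    (a x : Conf d N) {t : ℝ} (ht : t ∈ timeSet 1 T) :
    ‖hypCurve a x φ t - t • a‖ ≤ √t * (√(∑ j, (m j)⁻¹) * Dnorm m 1 T φ' + ‖x - a‖) := by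
  have hD : 0 ≤ Dnorm m 1 T φ' := Real.sqrt_nonneg _
  calc ‖hypCurve a x φ t - t • a‖ = ‖φ t + (x - a)‖ := by
        congr 1
        unfold hypCurve
        abel
    _ ≤ ‖φ t‖ + ‖x - a‖ := norm_add_le _ _
    _ ≤ √(t - 1) * (√(∑ j, (m j)⁻¹) * Dnorm m 1 T φ') + ‖x - a‖ := by
        gcongr
        exact h.norm_le hm ht.1.le ht.2
    _ ≤ √t * (√(∑ j, (m j)⁻¹) * Dnorm m 1 T φ') + √t * ‖x - a‖ := by
        gcongr
        · exact sub_le_self t zero_le_one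
        · exact le_mul_of_one_le_left (norm_nonneg _) (Real.one_le_sqrt.2 ht.1.le)
    _ = √t * (√(∑ j, (m j)⁻¹) * Dnorm m 1 T φ' + ‖x - a‖) := by ring

lemma InD.U_smul_sub_U_hypCurve_le (hm : ∀ i, 0 < m i) {a : Conf d N} (ha : ¬ collision a)
    (h : InD m 1 T φ φ') {x : Conf d N} {t : ℝ} (ht : t ∈ timeSet 1 T)
    (hγ : ¬ collision (hypCurve a x φ t)) :
    U m (t • a) - U m (hypCurve a x φ t) ≤
      2 * inverseSquarePotential m a * (√(∑ j, (m j)⁻¹) * Dnorm m 1 T φ' + ‖x - a‖) *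
        t ^ (-(3 / 2) : ℝ) := by
  set Q := √(∑ j, (m j)⁻¹) * Dnorm m 1 T φ' + ‖x - a‖
  have ht₀ : 0 < t := zero_lt_one.trans ht.1
  have hm₀ : ∀ i, 0 ≤ m i := fun i => (hm i).le
  have hdev : ‖hypCurve a x φ t - t • a‖ ≤ √t * Q := h.norm_hypCurve_sub_smul_le hm a x ht
  calc U m (t • a) - U m (hypCurve a x φ t)
      ≤ 2 * ‖hypCurve a x φ t - t • a‖ * inverseSquarePotential m (t • a) :=
        U_sub_U_le hm₀ (mt (collision_smul_iff ht₀.ne').1 ha) hγ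
    _ ≤ 2 * (√t * Q) * inverseSquarePotential m (t • a) := by
        have := inverseSquarePotential_nonneg hm₀ (t • a)
        gcongr
    _ = 2 * inverseSquarePotential m a * Q * (√t / t ^ 2) := by
        rw [inverseSquarePotential_smul]
        ring
    _ = 2 * inverseSquarePotential m a * Q * t ^ (-(3 / 2) : ℝ) := by rw [sqrt_div_sq_eq_rpow ht₀]

lemma coe_le_hypAction {a x : Conf d N} {c : ℝ}
    (h : IntegrableOn (hypIntegrand m a x φ φ') (timeSet 1 T) →
      (∀ᵐ t ∂volume.restrict (timeSet 1 T), ¬ collision (hypCurve a x φ t)) →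
      c ≤ ∫ t in timeSet 1 T, hypIntegrand m a x φ φ' t) :
    (c : EReal) ≤ hypAction m a x T φ φ' := by
  unfold hypAction
  split_ifs with hfin
  · exact EReal.coe_le_coe_iff.2 (h hfin.1 hfin.2)
  · exact le_top

lemma InD.le_hypAction (hm : ∀ i, 0 < m i) {a : Conf d N} (ha : ¬ collision a)
    (h : InD m 1 T φ φ') (x : Conf d N) :
    ((Dnorm m 1 T φ' ^ 2 / 2 - 4 * inverseSquarePotential m a *
      (√(∑ j, (m j)⁻¹) * Dnorm m 1 T φ' + ‖x - a‖) : ℝ) : EReal) ≤ hypAction m a x T φ φ' := by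
  refine coe_le_hypAction fun hint hcol => ?_
  set M := inverseSquarePotential m a
  set Q := √(∑ j, (m j)⁻¹) * Dnorm m 1 T φ' + ‖x - a‖
  have hM : 0 ≤ M := inverseSquarePotential_nonneg (fun i => (hm i).le) a
  have hD : 0 ≤ Dnorm m 1 T φ' := Real.sqrt_nonneg _
  have hMQ : 0 ≤ 2 * M * Q := by positivity
  have hkin := h.2.2.2.2.div_const 2
  have hpow := (integrableOn_rpow_timeSet (p := -(3 / 2)) (by norm_num) one_pos T).const_mul
    (2 * M * Q)
  have htail : ∫ t in timeSet 1 T, t ^ (-(3 / 2) : ℝ) ≤ 2 :=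
    (setIntegral_rpow_timeSet_le (by norm_num) one_pos T).trans_eq (by norm_num)
  calc Dnorm m 1 T φ' ^ 2 / 2 - 4 * M * Q
      = Dnorm m 1 T φ' ^ 2 / 2 - 2 * M * Q * 2 := by ring
    _ ≤ Dnorm m 1 T φ' ^ 2 / 2 - 2 * M * Q * ∫ t in timeSet 1 T, t ^ (-(3 / 2) : ℝ) :=
        sub_le_sub_left (mul_le_mul_of_nonneg_left htail hMQ) _
    _ = ∫ t in timeSet 1 T, (mnorm m (φ' t) ^ 2 / 2 - 2 * M * Q * t ^ (-(3 / 2) : ℝ)) := by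
        rw [integral_sub hkin hpow, integral_div, integral_const_mul, Dnorm_sq]
    _ ≤ ∫ t in timeSet 1 T, hypIntegrand m a x φ φ' t := by
        refine integral_mono_ae (hkin.sub hpow) hint ?_
        filter_upwards [hcol, ae_restrict_mem (measurableSet_timeSet 1 T)] with t hγ ht
        have hpot := h.U_smul_sub_U_hypCurve_le hm ha ht hγ
        simp only [hypIntegrand]
        linarith

theorem coercivity_hyperbolic_general (hm : ∀ i, 0 < m i) {a : Conf d N}
    (ha : ¬ collision a) {K : Set (Conf d N)} (hK : Bornology.IsBounded K) :
    ∃ B ≥ (0 : ℝ), ∃ C ≥ (0 : ℝ), ∀ x ∈ K, ∀ (T : EReal) (φ φ' : ℝ → Conf d N),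
      InD m 1 T φ φ' → ((1 / 2 * Dnorm m 1 T φ' ^ 2 - B * Dnorm m 1 T φ' - C : ℝ) : EReal) ≤
        hypAction m a x T φ φ' := by
  obtain ⟨R, hRpos, hR⟩ := hK.subset_closedBall_lt 0 a
  have hM := inverseSquarePotential_nonneg (fun i => (hm i).le) a
  refine ⟨4 * inverseSquarePotential m a * √(∑ j, (m j)⁻¹), by positivity,
    4 * inverseSquarePotential m a * R, by positivity, fun x hx T φ φ' h => ?_⟩
  refine le_trans (EReal.coe_le_coe_iff.2 ?_) (h.le_hypAction hm ha x)
  have hxR : ‖x - a‖ ≤ R := mem_closedBall_iff_norm.1 (hR hx)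
  linarith [mul_le_mul_of_nonneg_left hxR (mul_nonneg zero_le_four hM)]

end

/-- **Uniform coercivity of the renormalized action, hyperbolic case** : for every compact
set `K ⊆ X` there are constants `A > 0` and `B, C ≥ 0`, independent of `x` and `T`, such
that for all `x ∈ K`, all `T ∈ (1, +∞]` and all `φ ∈ D₀^{1,2}(1,T)`,
`A_{x,[1,T]}(φ) ≥ A ‖φ‖_{D_T}² − B ‖φ‖_{D_T} − C`. -/
theorem coercivity_hyperbolic {d N : ℕ} (hd : 2 ≤ d) (hN : 2 ≤ N)
    (m : Fin N → ℝ) (hm : ∀ i, 0 < m i)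
    (a : Conf d N) (ha : inOmega m a)
    (K : Set (Conf d N)) (hKcpt : IsCompact K) (hKX : ∀ x ∈ K, inX m x) :
    ∃ A > (0:ℝ), ∃ B ≥ (0:ℝ), ∃ C ≥ (0:ℝ), ∀ x ∈ K, ∀ T : EReal, 1 < T →
      ∀ φ φ' : ℝ → Conf d N, InD m 1 T φ φ' →
        ((A * (Dnorm m 1 T φ') ^ 2 - B * Dnorm m 1 T φ' - C : ℝ) : EReal) ≤
          hypAction m a x T φ φ' := by
  obtain ⟨B, hB, C, hC, h⟩ := coercivity_hyperbolic_general hm ha.2 hKcpt.isBounded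
  exact ⟨1 / 2, one_half_pos, B, hB, C, hC, fun x hx T _ => h x hx T⟩

end NBodyHJ
end
end

section
/- Uniform coercivity in the parabolic case: for every compact set K ⊂ X there exist constants A > 0 and B, C ≥ 0, independent of x and T, such that for all x ∈ K, all T ∈ (1, +∞], and all φ ∈ D_0^{1,2}(1, T), one has A_{x,[1,T]}(φ) ≥ A ‖φ‖_{D_T}² − B ‖φ‖_{D_T} − C. -/
open MeasureTheory Real Set Filter Topology
open scoped RealInnerProductSpace ENNReal

noncomputable section
namespace NBodyHJ

attribute [local instance] Classical.propDecidable

variable {d N : ℕ}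

/-- `bm` is a normalized minimal central configuration : it lies in `X`, is collision-free,
has unit mass norm, and minimizes the Newtonian potential over the inertia ellipsoid
`E = {x ∈ X : ⟨x,x⟩_M = 1}` (whence it is a critical point of `U` restricted to `E`). -/
def IsMinCentral (m : Fin N → ℝ) (bm : Conf d N) : Prop :=
  inX m bm ∧ ¬ collision bm ∧ minner m bm bm = 1 ∧
    ∀ y : Conf d N, inX m y → ¬ collision y → minner m y y = 1 → U m bm ≤ U m y

/-- `β = (9 U(b_m)/2)^{1/3}`. -/
def beta (m : Fin N → ℝ) (bm : Conf d N) : ℝ := (9 * U m bm / 2) ^ ((1:ℝ)/3)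

/-- The parabolic reference path `r₀(t) = β b_m t^{2/3}`. -/
def parR0 (m : Fin N → ℝ) (bm : Conf d N) (t : ℝ) : Conf d N :=
  (beta m bm * t ^ ((2:ℝ)/3)) • bm

/-- The second derivative `r̈₀(t) = −(2/9) β b_m t^{−4/3}` of the parabolic reference path. -/
def parR0'' (m : Fin N → ℝ) (bm : Conf d N) (t : ℝ) : Conf d N :=
  (beta m bm * (-(2:ℝ)/9) * t ^ (-(4:ℝ)/3)) • bm

/-- The motion `γ(t) = φ(t) + r₀(t) + x − β b_m` associated with `φ` in the parabolic case. -/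
def parCurve (m : Fin N → ℝ) (bm x : Conf d N) (φ : ℝ → Conf d N) (t : ℝ) : Conf d N :=
  φ t + parR0 m bm t + x - beta m bm • bm

/-- The integrand of the parabolic renormalized Lagrangian action. -/
def parIntegrand (m : Fin N → ℝ) (bm x : Conf d N) (φ φ' : ℝ → Conf d N) (t : ℝ) : ℝ :=
  (mnorm m (φ' t)) ^ 2 / 2 + U m (parCurve m bm x φ t) - U m (parR0 m bm t)
    - minner m (parR0'' m bm t) (φ t)

/-- The parabolic renormalized Lagrangian action `A_{x,[1,T]}(φ)`, with values in
`ℝ ∪ {+∞}` : it equals the integral of the renormalized Lagrangian if this integrand is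
integrable and the motion is a.e. collision-free, and `+∞` otherwise. -/
def parAction (m : Fin N → ℝ) (bm x : Conf d N) (T : EReal) (φ φ' : ℝ → Conf d N) : EReal :=
  if IntegrableOn (parIntegrand m bm x φ φ') (timeSet 1 T) ∧
      (∀ᵐ t ∂volume.restrict (timeSet 1 T), ¬ collision (parCurve m bm x φ t))
  then ((∫ t in timeSet 1 T, parIntegrand m bm x φ φ' t : ℝ) : EReal)
  else (⊤ : EReal)

/-- The infimum of the parabolic renormalized action over `D₀^{1,2}(1,T)`. -/
def parInf (m : Fin N → ℝ) (bm x : Conf d N) (T : EReal) : EReal :=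
  ⨅ (φ : ℝ → Conf d N) (φ' : ℝ → Conf d N) (_ : InD m 1 T φ φ'), parAction m bm x T φ φ'

/-- The renormalized value function `v(x)` in the parabolic case. -/
def parValue (m : Fin N → ℝ) (bm x : Conf d N) : ℝ := (parInf m bm x ⊤).toReal

/-! Write `z = x - β • bm`, so that the motion is `r₀ + φ + z`. Minimality of `bm` and homogeneity
give `U y ≥ U bm / ‖y‖`, with equality along `r₀`. Expanding the right-hand side at `r₀ t` by the
elementary bound `1 / ‖v + u‖ ≥ 1 / ‖v‖ - ⟪v, u⟫ / ‖v‖³ - ‖u‖² / (2 ‖v‖³)` with `u = φ t + z`, the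
linear term is `⟪r̈₀, u⟫` because `r₀` solves Kepler's equation, and the quadratic one is
`-(1/9) ‖φ + z‖² / t²` because `‖r₀‖³ = (9/2) U bm t²`. The part `⟪r̈₀, φ⟫` cancels against the
renormalization. Hardy's inequality, with constant `4`, absorbs the quadratic term into the kinetic
energy, as `4/9 < 1/2`, and `⟪r̈₀, z⟫` is integrable, being `O(t ^ (-4/3))`. Hence all constants are
explicit in `‖z‖`, which is bounded for `x` in a compact set. -/

lemma sq_div_sq_add_deriv_le {F : ℝ → ℝ} {t : ℝ} (ht : t ≠ 0) (hF : DifferentiableAt ℝ F t) :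
    1 / 4 * (F t ^ 2 / t ^ 2) + 1 / 2 * deriv (fun s => F s * F s * s⁻¹) t ≤ deriv F t ^ 2 := by
  have hderiv : deriv (fun s => F s * F s * s⁻¹) t =
      (deriv F t * F t + F t * deriv F t) * t⁻¹ + F t * F t * -(t ^ 2)⁻¹ :=
    ((hF.hasDerivAt.mul hF.hasDerivAt).mul (hasDerivAt_inv ht)).deriv
  have hsquare : deriv F t ^ 2 -
      (1 / 4 * (F t ^ 2 / t ^ 2) + 1 / 2 * deriv (fun s => F s * F s * s⁻¹) t) =
        (deriv F t - F t / (2 * t)) ^ 2 := by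
    rw [hderiv]
    field_simp
    ring
  exact sub_nonneg.1 (hsquare ▸ sq_nonneg _)

lemma intervalIntegrable_norm_sq_div_sq {E : Type*} [NormedAddCommGroup E] {F : ℝ → E} {a b : ℝ}
    (ha : 0 < a) (hab : a ≤ b) (hF : ContinuousOn F (uIcc a b)) :
    IntervalIntegrable (fun t => ‖F t‖ ^ 2 / t ^ 2) volume a b := by
  refine ((hF.norm.pow 2).div (by fun_prop) fun t ht => ?_).intervalIntegrable
  rw [uIcc_of_le hab] at ht
  exact pow_ne_zero 2 (ha.trans_le ht.1).ne'

theorem hardy_inequality {F : ℝ → ℝ} {a b : ℝ} (ha : 0 < a) (hab : a ≤ b)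
    (hF : AbsolutelyContinuousOnInterval F a b)
    (hF' : IntervalIntegrable (fun t => deriv F t ^ 2) volume a b) :
    ∫ t in a..b, F t ^ 2 / t ^ 2 ≤ 4 * (∫ t in a..b, deriv F t ^ 2) + 2 * (F a ^ 2 / a) := by
  have hpos : ∀ t ∈ uIcc a b, t ≠ 0 := fun t ht =>
    (ha.trans_le (uIcc_of_le hab ▸ ht).1).ne'
  have hG : AbsolutelyContinuousOnInterval (fun t => F t * F t * t⁻¹) a b :=
    (hF.fun_mul hF).fun_mul
      (contDiffOn_id.inv hpos).absolutelyContinuousOnInterval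
  have hint : IntervalIntegrable (fun t => F t ^ 2 / t ^ 2) volume a b := by
    simpa only [norm_eq_abs, sq_abs] using
      intervalIntegrable_norm_sq_div_sq ha hab hF.continuousOn
  have hmono : ∫ t in a..b,
        (1 / 4 * (F t ^ 2 / t ^ 2) + 1 / 2 * deriv (fun s => F s * F s * s⁻¹) t) ≤
      ∫ t in a..b, deriv F t ^ 2 := by
    refine intervalIntegral.integral_mono_ae_restrict hab
      ((hint.const_mul _).add (hG.intervalIntegrable_deriv.const_mul _)) hF' ?_
    rw [← uIcc_of_le hab]
    filter_upwards [ae_restrict_of_ae hF.ae_differentiableAt, ae_restrict_mem measurableSet_uIcc]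
      with t hdiff ht using sq_div_sq_add_deriv_le (hpos t ht) (hdiff ht)
  rw [intervalIntegral.integral_add (hint.const_mul _) (hG.intervalIntegrable_deriv.const_mul _),
    intervalIntegral.integral_const_mul, intervalIntegral.integral_const_mul,
    hG.integral_deriv_eq_sub] at hmono
  have hb : 0 ≤ F b * F b * b⁻¹ :=
    mul_nonneg (mul_self_nonneg _) (inv_nonneg.2 (ha.le.trans hab))
  have ha_eq : F a ^ 2 / a = F a * F a * a⁻¹ := by ring
  linarith

/-- The function `t ↦ ‖c‖ + ∫ s in a..t, ‖f s‖` dominates the norm of the primitive, so the real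
inequality suffices. -/
theorem hardy_inequality_primitive {E : Type*} [NormedAddCommGroup E] [NormedSpace ℝ E]
    {f : ℝ → E} {a b : ℝ} (ha : 0 < a) (hab : a ≤ b) (hf : IntervalIntegrable f volume a b)
    (hf2 : IntervalIntegrable (fun t => ‖f t‖ ^ 2) volume a b) (c : E) :
    ∫ t in a..b, ‖c + ∫ s in a..t, f s‖ ^ 2 / t ^ 2 ≤
      4 * (∫ t in a..b, ‖f t‖ ^ 2) + 2 * (‖c‖ ^ 2 / a) := by
  set G : ℝ → ℝ := fun t => ‖c‖ + ∫ s in a..t, ‖f s‖ with hGdef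
  have hG : AbsolutelyContinuousOnInterval G a b :=
    (contDiffOn_const.absolutelyContinuousOnInterval).fun_add
      (hf.norm.absolutelyContinuousOnInterval_intervalIntegral left_mem_uIcc)
  have hderiv : (fun t => ‖f t‖ ^ 2) =ᵐ[volume.restrict (uIoc a b)] fun t => deriv G t ^ 2 := by
    filter_upwards [ae_restrict_of_ae hf.norm.ae_hasDerivAt_integral,
      ae_restrict_mem measurableSet_uIoc] with t ht hmem
    rw [((ht (uIoc_subset_uIcc hmem) a left_mem_uIcc).const_add ‖c‖).deriv]
  have hdom : ∀ t ∈ Icc a b, ‖c + ∫ s in a..t, f s‖ ≤ G t := fun t ht =>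
    (norm_add_le _ _).trans
      (add_le_add le_rfl (intervalIntegral.norm_integral_le_integral_norm ht.1))
  calc ∫ t in a..b, ‖c + ∫ s in a..t, f s‖ ^ 2 / t ^ 2
      ≤ ∫ t in a..b, ‖G t‖ ^ 2 / t ^ 2 := by
        refine intervalIntegral.integral_mono_on hab
          (intervalIntegrable_norm_sq_div_sq ha hab
            (continuousOn_const.add (intervalIntegral.continuousOn_primitive_interval' hf
              left_mem_uIcc)))
          (intervalIntegrable_norm_sq_div_sq ha hab hG.continuousOn) fun t ht => ?_
        gcongr
        exact (hdom t ht).trans (le_abs_self _)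
    _ = ∫ t in a..b, G t ^ 2 / t ^ 2 := by simp only [norm_eq_abs, sq_abs]
    _ ≤ 4 * (∫ t in a..b, deriv G t ^ 2) + 2 * (G a ^ 2 / a) :=
        hardy_inequality ha hab hG (hf2.congr_ae hderiv)
    _ = 4 * (∫ t in a..b, ‖f t‖ ^ 2) + 2 * (‖c‖ ^ 2 / a) := by
        rw [intervalIntegral.integral_congr_ae_restrict hderiv]
        simp [hGdef]

lemma inv_norm_sub_le_inv_norm_add {E : Type*} [NormedAddCommGroup E] [InnerProductSpace ℝ E]
    {v u : E} (hv : v ≠ 0) (hvu : v + u ≠ 0) :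
    ‖v‖⁻¹ - ⟪v, u⟫ / ‖v‖ ^ 3 - ‖u‖ ^ 2 / (2 * ‖v‖ ^ 3) ≤ ‖v + u‖⁻¹ := by
  have hu : ‖u‖ ^ 2 = ‖v + u‖ ^ 2 - ‖v‖ ^ 2 - 2 * ⟪v, u⟫ := by
    rw [norm_add_sq_real]
    ring
  have hfactor : ‖v + u‖⁻¹ - (‖v‖⁻¹ - ⟪v, u⟫ / ‖v‖ ^ 3 - ‖u‖ ^ 2 / (2 * ‖v‖ ^ 3)) =
      (‖v + u‖ - ‖v‖) ^ 2 * (‖v + u‖ + 2 * ‖v‖) / (2 * ‖v + u‖ * ‖v‖ ^ 3) := by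
    rw [hu]
    field_simp
    ring
  have : 0 ≤ (‖v + u‖ - ‖v‖) ^ 2 * (‖v + u‖ + 2 * ‖v‖) / (2 * ‖v + u‖ * ‖v‖ ^ 3) := by
    positivity
  linarith

/-- The rescaling of the `i`-th position by `√mᵢ`: an isometry from the mass inner product onto a
Euclidean one (`Conf d N` itself carries the sup norm), through which the library's theory of
inner product spaces applies to `minner` and `mnorm`. -/
def massEmbedding (m : Fin N → ℝ) :
    Conf d N →L[ℝ] PiLp 2 (fun _ : Fin N => EuclideanSpace ℝ (Fin d)) :=
  (PiLp.continuousLinearEquiv 2 ℝ _).symm.toContinuousLinearMap ∘L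
    ContinuousLinearMap.pi fun i => √(m i) • ContinuousLinearMap.proj i

section Mass

variable {m : Fin N → ℝ}

lemma inner_massEmbedding (hm : ∀ i, 0 ≤ m i) (x y : Conf d N) :
    ⟪massEmbedding m x, massEmbedding m y⟫ = minner m x y := by
  rw [PiLp.inner_apply]
  refine Finset.sum_congr rfl fun i _ => ?_
  change ⟪√(m i) • x i, √(m i) • y i⟫ = _
  rw [real_inner_smul_left, real_inner_smul_right, ← mul_assoc, mul_self_sqrt (hm i)]

lemma norm_massEmbedding (hm : ∀ i, 0 ≤ m i) (x : Conf d N) :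
    ‖massEmbedding m x‖ = mnorm m x := by
  rw [mnorm, ← inner_massEmbedding hm, norm_eq_sqrt_real_inner]

lemma massEmbedding_injective (hm : ∀ i, 0 < m i) :
    Function.Injective (massEmbedding (d := d) m) := by
  intro x y hxy
  ext1 i
  have hi : √(m i) • x i = √(m i) • y i := congrArg (fun v => v i) hxy
  exact smul_right_injective _ (sqrt_pos.2 (hm i)).ne' hi

lemma mnorm_eq_zero (hm : ∀ i, 0 < m i) {x : Conf d N} : mnorm m x = 0 ↔ x = 0 := by
  rw [← norm_massEmbedding fun i => (hm i).le, norm_eq_zero,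
    map_eq_zero_iff _ (massEmbedding_injective hm)]

lemma mnorm_smul (hm : ∀ i, 0 ≤ m i) (c : ℝ) (x : Conf d N) :
    mnorm m (c • x) = |c| * mnorm m x := by
  rw [← norm_massEmbedding hm, map_smul, norm_smul, norm_massEmbedding hm, norm_eq_abs]

lemma abs_minner_le (hm : ∀ i, 0 ≤ m i) (x y : Conf d N) :
    |minner m x y| ≤ mnorm m x * mnorm m y := by
  simpa only [inner_massEmbedding hm, norm_massEmbedding hm] using
    abs_real_inner_le_norm (massEmbedding m x) (massEmbedding m y)

@[fun_prop]
lemma continuous_mnorm (m : Fin N → ℝ) : Continuous (mnorm (d := d) m) := by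
  unfold mnorm minner
  fun_prop

end Mass

section Potential

variable {m : Fin N → ℝ}

lemma inX_add {x y : Conf d N} (hx : inX m x) (hy : inX m y) : inX m (x + y) := by
  simp only [inX, Pi.add_apply, smul_add, Finset.sum_add_distrib] at *
  rw [hx, hy, add_zero]

lemma inX_smul (c : ℝ) {x : Conf d N} (hx : inX m x) : inX m (c • x) := by
  simp only [inX, Pi.smul_apply, smul_comm _ c, ← Finset.smul_sum] at *
  rw [hx, smul_zero]

lemma collision_zero (hN : 2 ≤ N) : collision (0 : Conf d N) :=
  ⟨⟨0, by omega⟩, ⟨1, by omega⟩, by simp, rfl⟩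

lemma collision_of_smul {c : ℝ} (hc : c ≠ 0) {x : Conf d N} (hx : collision (c • x)) :
    collision x := by
  obtain ⟨i, j, hij, heq⟩ := hx
  exact ⟨i, j, hij, smul_right_injective _ hc heq⟩

lemma U_smul (m : Fin N → ℝ) {c : ℝ} (hc : 0 < c) (x : Conf d N) :
    U m (c • x) = U m x / c := by
  simp only [U, Finset.sum_div]
  refine Finset.sum_congr rfl fun i _ => Finset.sum_congr rfl fun j _ => ?_
  rw [Pi.smul_apply, Pi.smul_apply, ← smul_sub, norm_smul, norm_of_nonneg hc.le]
  split_ifs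
  · rw [mul_comm c, div_div]
  · rw [zero_div]

lemma U_pos (hm : ∀ i, 0 < m i) (hN : 2 ≤ N) {x : Conf d N} (hx : ¬ collision x) :
    0 < U m x := by
  have hterm : ∀ i j : Fin N, i < j → 0 < m i * m j / ‖x i - x j‖ := fun i j hij =>
    div_pos (mul_pos (hm i) (hm j))
      (norm_pos_iff.2 (sub_ne_zero.2 fun h => hx ⟨i, j, hij.ne, h⟩))
  have hnonneg : ∀ i j : Fin N, 0 ≤ if i < j then m i * m j / ‖x i - x j‖ else 0 := fun i j => by
    split_ifs with hij
    exacts [(hterm i j hij).le, le_rfl]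
  obtain ⟨i, j, hij⟩ : ∃ i j : Fin N, i < j := ⟨⟨0, by omega⟩, ⟨1, by omega⟩, by simp⟩
  exact Finset.sum_pos' (fun k _ => Finset.sum_nonneg fun l _ => hnonneg k l)
    ⟨i, Finset.mem_univ i, Finset.sum_pos' (fun l _ => hnonneg i l)
      ⟨j, Finset.mem_univ j, by simpa only [if_pos hij] using hterm i j hij⟩⟩

namespace IsMinCentral

variable {bm : Conf d N}

lemma mnorm_eq_one (hbm : IsMinCentral m bm) : mnorm m bm = 1 := by
  rw [mnorm, hbm.2.2.1, sqrt_one]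

lemma two_le (hm : ∀ i, 0 < m i) (hbm : IsMinCentral m bm) : 2 ≤ N := by
  by_contra! hN
  have := Fin.subsingleton_iff_le_one.2 (Nat.le_of_lt_succ hN)
  have hzero : bm = 0 := funext fun i => by
    have hsum := hbm.1
    rw [inX, Fintype.sum_subsingleton _ i] at hsum
    exact (smul_eq_zero.1 hsum).resolve_left (hm i).ne'
  exact one_ne_zero (hbm.mnorm_eq_one.symm.trans ((mnorm_eq_zero hm).2 hzero))

lemma U_pos (hm : ∀ i, 0 < m i) (hbm : IsMinCentral m bm) : 0 < U m bm :=
  NBodyHJ.U_pos hm (hbm.two_le hm) hbm.2.1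

lemma div_mnorm_le_U (hm : ∀ i, 0 < m i) (hbm : IsMinCentral m bm) {y : Conf d N}
    (hyX : inX m y) (hy : ¬ collision y) : U m bm / mnorm m y ≤ U m y := by
  have hm0 : ∀ i, 0 ≤ m i := fun i => (hm i).le
  have hne : mnorm m y ≠ 0 := fun h =>
    hy ((mnorm_eq_zero hm).1 h ▸ collision_zero (hbm.two_le hm))
  have hpos : 0 < mnorm m y := (sqrt_nonneg _).lt_of_ne' hne
  have hunit : mnorm m ((mnorm m y)⁻¹ • y) = 1 := by
    rw [mnorm_smul hm0, abs_of_pos (inv_pos.2 hpos), inv_mul_cancel₀ hne]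
  have hmin : U m bm ≤ U m ((mnorm m y)⁻¹ • y) :=
    hbm.2.2.2 _ (inX_smul _ hyX) (fun h => hy (collision_of_smul (inv_ne_zero hne) h))
      (sqrt_eq_one.1 hunit)
  rwa [U_smul m (inv_pos.2 hpos), div_inv_eq_mul, ← div_le_iff₀ hpos] at hmin

end IsMinCentral

end Potential

section ParabolicPath

variable {m : Fin N → ℝ} {bm : Conf d N} {t : ℝ}

lemma beta_pow_three (hU : 0 ≤ U m bm) : beta m bm ^ 3 = 9 * U m bm / 2 := by
  rw [beta, ← rpow_natCast, ← rpow_mul (by positivity)]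
  norm_num

lemma IsMinCentral.beta_pos (hm : ∀ i, 0 < m i) (hbm : IsMinCentral m bm) : 0 < beta m bm :=
  rpow_pos_of_pos (by linarith [hbm.U_pos hm]) _

lemma parR0''_eq_smul (m : Fin N → ℝ) (bm : Conf d N) (ht : 0 < t) :
    parR0'' m bm t = (-(2 / 9) / t ^ 2) • parR0 m bm t := by
  have hpow : t ^ (-(4 : ℝ) / 3) = t ^ ((2 : ℝ) / 3) / t ^ 2 := by
    rw [← rpow_natCast t 2, ← rpow_sub ht]
    norm_num
  rw [parR0'', parR0, smul_smul, hpow]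
  congr 1
  ring

namespace IsMinCentral

lemma mnorm_parR0 (hm : ∀ i, 0 < m i) (hbm : IsMinCentral m bm) (ht : 0 ≤ t) :
    mnorm m (parR0 m bm t) = beta m bm * t ^ ((2 : ℝ) / 3) := by
  rw [parR0, mnorm_smul fun i => (hm i).le, hbm.mnorm_eq_one, mul_one,
    abs_of_nonneg (mul_nonneg (hbm.beta_pos hm).le (rpow_nonneg ht _))]

lemma mnorm_parR0'' (hm : ∀ i, 0 < m i) (hbm : IsMinCentral m bm) (ht : 0 ≤ t) :
    mnorm m (parR0'' m bm t) = 2 / 9 * beta m bm * t ^ (-(4 : ℝ) / 3) := by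
  have hneg : beta m bm * (-2 / 9) * t ^ (-(4 : ℝ) / 3) ≤ 0 :=
    mul_nonpos_of_nonpos_of_nonneg (by linarith [hbm.beta_pos hm]) (rpow_nonneg ht _)
  rw [parR0'', mnorm_smul fun i => (hm i).le, hbm.mnorm_eq_one, mul_one, abs_of_nonpos hneg]
  ring

lemma mnorm_parR0_pow_three (hm : ∀ i, 0 < m i) (hbm : IsMinCentral m bm) (ht : 0 ≤ t) :
    mnorm m (parR0 m bm t) ^ 3 = 9 / 2 * U m bm * t ^ 2 := by
  have hcube : (t ^ ((2 : ℝ) / 3)) ^ 3 = t ^ 2 := by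
    rw [← rpow_natCast, ← rpow_natCast, ← rpow_mul ht]
    norm_num
  rw [hbm.mnorm_parR0 hm ht, mul_pow, beta_pow_three (hbm.U_pos hm).le, hcube]
  ring

lemma U_parR0 (hm : ∀ i, 0 < m i) (hbm : IsMinCentral m bm) (ht : 0 < t) :
    U m (parR0 m bm t) = U m bm / mnorm m (parR0 m bm t) := by
  rw [hbm.mnorm_parR0 hm ht.le]
  exact U_smul m (mul_pos (hbm.beta_pos hm) (rpow_pos_of_pos ht _)) bm

lemma le_U_parR0_add (hm : ∀ i, 0 < m i) (hbm : IsMinCentral m bm) (ht : 0 < t) {u : Conf d N}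
    (hu : inX m u) (hcol : ¬ collision (parR0 m bm t + u)) :
    U m (parR0 m bm t) + minner m (parR0'' m bm t) u - 1 / 9 * (mnorm m u ^ 2 / t ^ 2) ≤
      U m (parR0 m bm t + u) := by
  have hm0 : ∀ i, 0 ≤ m i := fun i => (hm i).le
  have hUpos := hbm.U_pos hm
  set v := parR0 m bm t
  have hvnorm : 0 < mnorm m v := by
    rw [hbm.mnorm_parR0 hm ht.le]
    exact mul_pos (hbm.beta_pos hm) (rpow_pos_of_pos ht _)
  have hradius : mnorm m v ^ 3 = 9 / 2 * U m bm * t ^ 2 := hbm.mnorm_parR0_pow_three hm ht.le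
  have hUv : U m v = U m bm / mnorm m v := hbm.U_parR0 hm ht
  have hforce : minner m (parR0'' m bm t) u = -(2 / 9) / t ^ 2 * minner m v u := by
    rw [parR0''_eq_smul m bm ht, ← inner_massEmbedding hm0, map_smul, real_inner_smul_left,
      inner_massEmbedding hm0]
  have hkepler : (mnorm m v)⁻¹ - minner m v u / mnorm m v ^ 3 -
      mnorm m u ^ 2 / (2 * mnorm m v ^ 3) ≤ (mnorm m (v + u))⁻¹ := by
    simp only [← inner_massEmbedding hm0, ← norm_massEmbedding hm0, map_add]
    refine inv_norm_sub_le_inv_norm_add ?_ ?_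
    · rw [← norm_ne_zero_iff, norm_massEmbedding hm0]
      exact hvnorm.ne'
    · rw [← map_add, map_ne_zero_iff _ (massEmbedding_injective hm)]
      exact fun h => hcol (h ▸ collision_zero (hbm.two_le hm))
  calc U m v + minner m (parR0'' m bm t) u - 1 / 9 * (mnorm m u ^ 2 / t ^ 2)
      = U m bm * ((mnorm m v)⁻¹ - minner m v u / mnorm m v ^ 3 -
          mnorm m u ^ 2 / (2 * mnorm m v ^ 3)) := by
        rw [hUv, hforce, hradius]
        field_simp
        ring
    _ ≤ U m bm * (mnorm m (v + u))⁻¹ := by gcongr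
    _ = U m bm / mnorm m (v + u) := (div_eq_mul_inv _ _).symm
    _ ≤ U m (v + u) := hbm.div_mnorm_le_U hm (inX_add (inX_smul _ hbm.1) hu) hcol

lemma le_parIntegrand (hm : ∀ i, 0 < m i) (hbm : IsMinCentral m bm) {x : Conf d N}
    {φ : ℝ → Conf d N} (φ' : ℝ → Conf d N) (ht : 0 < t) (hx : inX m x) (hφ : inX m (φ t))
    (hcol : ¬ collision (parCurve m bm x φ t)) :
    1 / 2 * mnorm m (φ' t) ^ 2 - 1 / 9 * (mnorm m (φ t + (x - beta m bm • bm)) ^ 2 / t ^ 2) -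
        2 / 9 * beta m bm * mnorm m (x - beta m bm • bm) * t ^ (-(4 : ℝ) / 3) ≤
      parIntegrand m bm x φ φ' t := by
  have hm0 : ∀ i, 0 ≤ m i := fun i => (hm i).le
  set z := x - beta m bm • bm with hz
  have hzX : inX m z := by
    rw [hz, sub_eq_add_neg, ← neg_smul]
    exact inX_add hx (inX_smul _ hbm.1)
  have hcurve : parCurve m bm x φ t = parR0 m bm t + (φ t + z) := by
    rw [parCurve, hz]
    abel
  have hpotential := hbm.le_U_parR0_add hm ht (inX_add hφ hzX) (hcurve ▸ hcol)
  have hforce : minner m (parR0'' m bm t) (φ t + z) =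
      minner m (parR0'' m bm t) (φ t) + minner m (parR0'' m bm t) z := by
    simp only [← inner_massEmbedding hm0, map_add, inner_add_right]
  have hoffset := neg_le_of_abs_le (abs_minner_le hm0 (parR0'' m bm t) z)
  rw [hbm.mnorm_parR0'' hm ht.le] at hoffset
  rw [parIntegrand, hcurve]
  linarith

end IsMinCentral

end ParabolicPath

section Action

variable {m : Fin N → ℝ}

lemma Ioc_subset_timeSet_s5 {t0 S : ℝ} {T : EReal} (hST : (S : EReal) < T) :
    Ioc t0 S ⊆ timeSet t0 T := fun _ ht =>
  ⟨ht.1, (EReal.coe_le_coe_iff.2 ht.2).trans_lt hST⟩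

lemma intervalIntegrable_of_integrableOn_timeSet {E : Type*} [NormedAddCommGroup E] {f : ℝ → E}
    {t0 S : ℝ} {T : EReal} (hf : IntegrableOn f (timeSet t0 T)) (hS : t0 ≤ S)
    (hST : (S : EReal) < T) : IntervalIntegrable f volume t0 S :=
  (intervalIntegrable_iff_integrableOn_Ioc_of_le hS).2 (hf.mono_set (Ioc_subset_timeSet_s5 hST))

lemma le_setIntegral_timeSet {t0 c : ℝ} {T : EReal} (hT : (t0 : EReal) < T) {f : ℝ → ℝ}
    (hf : IntegrableOn f (timeSet t0 T))
    (h : ∀ S : ℝ, t0 ≤ S → (S : EReal) < T → c ≤ ∫ t in t0..S, f t) :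
    c ≤ ∫ t in timeSet t0 T, f t := by
  induction T with
  | bot => exact absurd hT not_lt_bot
  | top =>
    have htop : timeSet t0 ⊤ = Ioi t0 := by ext t; simp [timeSet]
    rw [htop] at hf ⊢
    exact ge_of_tendsto (intervalIntegral_tendsto_integral_Ioi t0 hf tendsto_id)
      ((eventually_ge_atTop t0).mono fun S hS => h S hS (EReal.coe_lt_top S))
  | coe b =>
    have hb : t0 < b := EReal.coe_lt_coe_iff.1 hT
    have hcoe : timeSet t0 b = Ioo t0 b := by ext t; simp [timeSet]
    rw [hcoe] at hf ⊢
    rw [← integral_Ioc_eq_integral_Ioo, ← intervalIntegral.integral_of_le hb.le]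
    have hcont : ContinuousOn (fun S => ∫ t in t0..S, f t) (Icc t0 b) :=
      uIcc_of_le hb.le ▸ intervalIntegral.continuousOn_primitive_interval
        (by rwa [uIcc_of_le hb.le, integrableOn_Icc_iff_integrableOn_Ioo])
    have hlim := (hcont b (right_mem_Icc.2 hb.le)).mono Ioo_subset_Icc_self
    have : (𝓝[Ioo t0 b] b).NeBot := right_nhdsWithin_Ioo_neBot hb
    exact ge_of_tendsto hlim (eventually_mem_nhdsWithin.mono fun S hS =>
      h S hS.1.le (EReal.coe_lt_coe_iff.2 hS.2))

lemma integral_rpow_le_of_lt_neg_one {a p S : ℝ} (ha : 0 < a) (hp : p < -1) (hS : a ≤ S) :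
    ∫ t in a..S, t ^ p ≤ -a ^ (p + 1) / (p + 1) := by
  have h0 : (0 : ℝ) ∉ uIcc a S := fun h => (ha.trans_le (uIcc_of_le hS ▸ h).1).false
  rw [integral_rpow (Or.inr ⟨hp.ne, h0⟩)]
  refine div_le_div_of_nonpos_of_le (by linarith) ?_
  linarith [rpow_nonneg (ha.le.trans hS) (p + 1)]

namespace InD

variable {t0 S : ℝ} {T : EReal} {φ φ' : ℝ → Conf d N}

lemma inX_apply (h : InD m t0 T φ φ') {t : ℝ} (ht : t0 ≤ t) (htT : (t : EReal) < T) : inX m (φ t) :=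
  h.2.1 t ht htT

lemma integrableOn_mnorm_sq (h : InD m t0 T φ φ') :
    IntegrableOn (fun t => mnorm m (φ' t) ^ 2) (timeSet t0 T) :=
  h.2.2.2.2

lemma intervalIntegrable_mnorm_sq (h : InD m t0 T φ φ') (hS : t0 ≤ S) (hST : (S : EReal) < T) :
    IntervalIntegrable (fun t => mnorm m (φ' t) ^ 2) volume t0 S :=
  intervalIntegrable_of_integrableOn_timeSet h.integrableOn_mnorm_sq hS hST

lemma intervalIntegrable_massEmbedding (h : InD m t0 T φ φ') (hS : t0 ≤ S)
    (hST : (S : EReal) < T) :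
    IntervalIntegrable (fun t => massEmbedding m (φ' t)) volume t0 S :=
  (intervalIntegrable_iff_integrableOn_Ioc_of_le hS).2
    ((massEmbedding m).integrable_comp (h.2.2.2.1 S hS hST))

lemma massEmbedding_eq_integral (h : InD m t0 T φ φ') {t : ℝ} (ht : t0 ≤ t)
    (htT : (t : EReal) < T) :
    massEmbedding m (φ t) = ∫ s in t0..t, massEmbedding m (φ' s) := by
  rw [intervalIntegral.integral_of_le ht, h.2.2.1 t ht htT]
  exact ((massEmbedding m).integral_comp_comm (h.2.2.2.1 t ht htT)).symm

lemma mnorm_add_eq (hm : ∀ i, 0 ≤ m i) (h : InD m t0 T φ φ') (c : Conf d N) {t : ℝ}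
    (ht : t0 ≤ t) (htT : (t : EReal) < T) :
    mnorm m (φ t + c) = ‖massEmbedding m c + ∫ s in t0..t, massEmbedding m (φ' s)‖ := by
  rw [← norm_massEmbedding hm, map_add, add_comm, h.massEmbedding_eq_integral ht htT]

lemma intervalIntegrable_mnorm_add_sq_div_sq (hm : ∀ i, 0 ≤ m i) (ht0 : 0 < t0)
    (h : InD m t0 T φ φ') (c : Conf d N) (hS : t0 ≤ S) (hST : (S : EReal) < T) :
    IntervalIntegrable (fun t => mnorm m (φ t + c) ^ 2 / t ^ 2) volume t0 S := by
  have hcont : ContinuousOn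
      (fun t => massEmbedding m c + ∫ s in t0..t, massEmbedding m (φ' s)) (uIcc t0 S) :=
    continuousOn_const.add (intervalIntegral.continuousOn_primitive_interval'
      (h.intervalIntegrable_massEmbedding hS hST) left_mem_uIcc)
  refine (intervalIntegrable_norm_sq_div_sq ht0 hS hcont).congr fun t ht => ?_
  rw [uIoc_of_le hS] at ht
  rw [← h.mnorm_add_eq hm c ht.1.le (Ioc_subset_timeSet_s5 hST ht).2]

lemma hardy (hm : ∀ i, 0 ≤ m i) (ht0 : 0 < t0) (h : InD m t0 T φ φ') (c : Conf d N)
    (hS : t0 ≤ S) (hST : (S : EReal) < T) :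
    ∫ t in t0..S, mnorm m (φ t + c) ^ 2 / t ^ 2 ≤
      4 * (∫ t in t0..S, mnorm m (φ' t) ^ 2) + 2 * (mnorm m c ^ 2 / t0) := by
  have hprimitive : ∫ t in t0..S, mnorm m (φ t + c) ^ 2 / t ^ 2 =
      ∫ t in t0..S, ‖massEmbedding m c + ∫ s in t0..t, massEmbedding m (φ' s)‖ ^ 2 / t ^ 2 :=
    intervalIntegral.integral_congr_uIoo fun t ht => by
      rw [uIoo_of_le hS] at ht
      simp only [h.mnorm_add_eq hm c ht.1.le
        (Ioc_subset_timeSet_s5 hST (Ioo_subset_Ioc_self ht)).2]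
  rw [hprimitive]
  simpa only [norm_massEmbedding hm] using
    hardy_inequality_primitive ht0 hS (h.intervalIntegrable_massEmbedding hS hST)
      (by simpa only [norm_massEmbedding hm] using h.intervalIntegrable_mnorm_sq hS hST)
      (massEmbedding m c)

lemma ae_le_parIntegrand (hm : ∀ i, 0 < m i) {bm : Conf d N} (hbm : IsMinCentral m bm)
    {x : Conf d N} (hx : inX m x) (h : InD m 1 T φ φ')
    (hcol : ∀ᵐ t ∂volume.restrict (timeSet 1 T), ¬ collision (parCurve m bm x φ t))
    (hST : (S : EReal) < T) :
    ∀ᵐ t ∂volume.restrict (Ioc 1 S),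
      1 / 2 * mnorm m (φ' t) ^ 2 - 1 / 9 * (mnorm m (φ t + (x - beta m bm • bm)) ^ 2 / t ^ 2) -
          2 / 9 * beta m bm * mnorm m (x - beta m bm • bm) * t ^ (-(4 : ℝ) / 3) ≤
        parIntegrand m bm x φ φ' t := by
  filter_upwards [ae_restrict_of_ae_restrict_of_subset (Ioc_subset_timeSet_s5 hST) hcol,
    ae_restrict_mem measurableSet_Ioc] with t hcolt ht
  exact hbm.le_parIntegrand hm φ' (one_pos.trans ht.1) hx
    (h.inX_apply ht.1.le (Ioc_subset_timeSet_s5 hST ht).2) hcolt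

lemma le_integral_parIntegrand (hm : ∀ i, 0 < m i) {bm : Conf d N} (hbm : IsMinCentral m bm)
    {x : Conf d N} (hx : inX m x) (h : InD m 1 T φ φ')
    (hint : IntegrableOn (parIntegrand m bm x φ φ') (timeSet 1 T))
    (hcol : ∀ᵐ t ∂volume.restrict (timeSet 1 T), ¬ collision (parCurve m bm x φ t))
    (hS : 1 ≤ S) (hST : (S : EReal) < T) :
    1 / 2 * (∫ t in 1..S, mnorm m (φ' t) ^ 2) -
        1 / 9 * (∫ t in 1..S, mnorm m (φ t + (x - beta m bm • bm)) ^ 2 / t ^ 2) -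
        2 / 9 * beta m bm * mnorm m (x - beta m bm • bm) * ∫ t in 1..S, t ^ (-(4 : ℝ) / 3) ≤
      ∫ t in 1..S, parIntegrand m bm x φ φ' t := by
  have hkin := (h.intervalIntegrable_mnorm_sq hS hST).const_mul (1 / 2)
  have hpos := (h.intervalIntegrable_mnorm_add_sq_div_sq (fun i => (hm i).le) one_pos
    (x - beta m bm • bm) hS hST).const_mul (1 / 9)
  have htail := (intervalIntegral.intervalIntegrable_rpow (μ := volume) (r := -(4 : ℝ) / 3)
    (Or.inr fun h0 => (one_pos.trans_le (uIcc_of_le hS ▸ h0).1).false)).const_mul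
      (2 / 9 * beta m bm * mnorm m (x - beta m bm • bm))
  have hL := intervalIntegrable_of_integrableOn_timeSet hint hS hST
  simp only [← intervalIntegral.integral_const_mul]
  rw [← intervalIntegral.integral_sub hkin hpos,
    ← intervalIntegral.integral_sub (hkin.sub hpos) htail]
  refine intervalIntegral.integral_mono_ae_restrict hS ((hkin.sub hpos).sub htail) hL ?_
  rw [← restrict_Ioc_eq_restrict_Icc]
  exact h.ae_le_parIntegrand hm hbm hx hcol hST

lemma le_integral_parIntegrand_sub (hm : ∀ i, 0 < m i) {bm : Conf d N}
    (hbm : IsMinCentral m bm) {x : Conf d N} (hx : inX m x) (h : InD m 1 T φ φ')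
    (hint : IntegrableOn (parIntegrand m bm x φ φ') (timeSet 1 T))
    (hcol : ∀ᵐ t ∂volume.restrict (timeSet 1 T), ¬ collision (parCurve m bm x φ t))
    (hS : 1 ≤ S) (hST : (S : EReal) < T) :
    -(2 / 9 * mnorm m (x - beta m bm • bm) ^ 2 +
        2 / 3 * beta m bm * mnorm m (x - beta m bm • bm)) ≤
      ∫ t in 1..S, (parIntegrand m bm x φ φ' t - 1 / 18 * mnorm m (φ' t) ^ 2) := by
  have hL := intervalIntegrable_of_integrableOn_timeSet hint hS hST
  have htail : ∫ t in 1..S, t ^ (-(4 : ℝ) / 3) ≤ 3 :=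
    (integral_rpow_le_of_lt_neg_one one_pos (by norm_num) hS).trans_eq (by norm_num)
  have hforce := mul_le_mul_of_nonneg_left htail
    (mul_nonneg (mul_nonneg (by norm_num) (hbm.beta_pos hm).le) (sqrt_nonneg _) :
      0 ≤ 2 / 9 * beta m bm * mnorm m (x - beta m bm • bm))
  have hhardy := h.hardy (fun i => (hm i).le) one_pos (x - beta m bm • bm) hS hST
  rw [intervalIntegral.integral_sub hL ((h.intervalIntegrable_mnorm_sq hS hST).const_mul _),
    intervalIntegral.integral_const_mul]
  linarith [h.le_integral_parIntegrand hm hbm hx hint hcol hS hST]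

end InD

end Action

theorem coercivity_parabolic_general {m : Fin N → ℝ} (hm : ∀ i, 0 < m i) {bm : Conf d N}
    (hbm : IsMinCentral m bm) {x : Conf d N} (hx : inX m x) {T : EReal} (hT : 1 < T)
    {φ φ' : ℝ → Conf d N} (hφ : InD m 1 T φ φ') :
    ((1 / 18 * Dnorm m 1 T φ' ^ 2 - (2 / 9 * mnorm m (x - beta m bm • bm) ^ 2 +
        2 / 3 * beta m bm * mnorm m (x - beta m bm • bm)) : ℝ) : EReal) ≤
      parAction m bm x T φ φ' := by
  rw [parAction]
  split_ifs with hfinite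
  · obtain ⟨hint, hcol⟩ := hfinite
    have hkin := hφ.integrableOn_mnorm_sq.const_mul (1 / 18)
    have hbound := le_setIntegral_timeSet hT (hint.sub hkin) fun S hS hST =>
      hφ.le_integral_parIntegrand_sub hm hbm hx hint hcol hS hST
    simp only [Pi.sub_apply] at hbound
    rw [integral_sub hint hkin, integral_const_mul] at hbound
    rw [EReal.coe_le_coe_iff, Dnorm, sq_sqrt (integral_nonneg fun t => sq_nonneg _)]
    linarith
  · exact le_top

/-- **Uniform coercivity of the renormalized action, parabolic case** : for every compact
set `K ⊆ X` there are constants `A > 0` and `B, C ≥ 0`, independent of `x` and `T`, such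
that for all `x ∈ K`, all `T ∈ (1, +∞]` and all `φ ∈ D₀^{1,2}(1,T)`,
`A_{x,[1,T]}(φ) ≥ A ‖φ‖_{D_T}² − B ‖φ‖_{D_T} − C`. -/
theorem coercivity_parabolic {d N : ℕ} (hd : 2 ≤ d) (hN : 2 ≤ N)
    (m : Fin N → ℝ) (hm : ∀ i, 0 < m i)
    (bm : Conf d N) (hbm : IsMinCentral m bm)
    (K : Set (Conf d N)) (hKcpt : IsCompact K) (hKX : ∀ x ∈ K, inX m x) :
    ∃ A > (0:ℝ), ∃ B ≥ (0:ℝ), ∃ C ≥ (0:ℝ), ∀ x ∈ K, ∀ T : EReal, 1 < T →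
      ∀ φ φ' : ℝ → Conf d N, InD m 1 T φ φ' →
        ((A * (Dnorm m 1 T φ') ^ 2 - B * Dnorm m 1 T φ' - C : ℝ) : EReal) ≤
          parAction m bm x T φ φ' := by
  obtain ⟨C, hC⟩ := hKcpt.exists_bound_of_continuousOn
    (f := fun x => 2 / 9 * mnorm m (x - beta m bm • bm) ^ 2 +
      2 / 3 * beta m bm * mnorm m (x - beta m bm • bm)) (by fun_prop)
  refine ⟨1 / 18, by norm_num, 0, le_rfl, |C|, abs_nonneg C, fun x hx T hT φ φ' hφ =>
    (EReal.coe_le_coe_iff.2 ?_).trans (coercivity_parabolic_general hm hbm (hKX x hx) hT hφ)⟩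
  linarith [(le_abs_self _).trans ((hC x hx).trans (le_abs_self C))]

end NBodyHJ
end
end
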